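/- Let A be a commutative ring, V an A-module, and (F^q)_{q∈ℤ} a family of A-submodules of V. Regard W = A[x,x⁻¹] ⊗_A V as a module over the polynomial ring A[x] via the inclusion A[x] ⊆ A[x,x⁻¹], and let Rees(F) ⊆ W be the A[x]-submodule generated by all elements x^q ⊗ v with q ∈ ℤ and v ∈ F^q. For an A-linear functional α : V → A and an integer p, let α̃_p : W → A[x,x⁻¹] be the A[x,x⁻¹]-linear map determined by f ⊗ v ↦ x^p · f · α(v). Then α̃_p maps Rees(F) into the subring A[x] if and only if F^q ⊆ ker α for every integer q < −p. -/

import Mathlib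

open Polynomial LaurentPolynomial TensorProduct

/-- The algebra maps `A → A[x] → A[x,x⁻¹]` form a scalar tower. -/
instance laurentTower (A : Type*) [CommRing A] :
    IsScalarTower A (Polynomial A) (LaurentPolynomial A) :=
  IsScalarTower.of_algebraMap_eq fun c => by
    simp [algebraMap_eq_toLaurent, Polynomial.algebraMap_apply]

/-- Let `A` be a commutative ring, `V` an `A`-module and
`(F q)_{q ∈ ℤ}` a family of submodules of `V`.  Let `W = A[x,x⁻¹] ⊗[A] V`, regarded
as an `A[x]`-module, and let `Rees ⊆ W` be the `A[x]`-submodule generated by the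
elements `x^q ⊗ v` with `v ∈ F q`.  For an `A`-linear functional `α : V → A` and
`p ∈ ℤ`, let `αt : W → A[x,x⁻¹]` be the `A[x,x⁻¹]`-linear map determined by
`f ⊗ v ↦ x^p * f * α v`.  Then `αt` maps `Rees` into (the image of) `A[x]` iff
`F q ⊆ ker α` for every integer `q < -p`. -/
theorem rees_dual_filtration
    (A : Type*) [CommRing A] (V : Type*) [AddCommGroup V] [Module A V]
    (F : ℤ → Submodule A V)
    (α : V →ₗ[A] A) (p : ℤ)
    (αt : (LaurentPolynomial A ⊗[A] V) →ₗ[LaurentPolynomial A] LaurentPolynomial A)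
    (hαt : ∀ (f : LaurentPolynomial A) (v : V),
      αt (f ⊗ₜ[A] v) = LaurentPolynomial.T p * f * algebraMap A (LaurentPolynomial A) (α v))
    (Rees : Submodule (Polynomial A) (LaurentPolynomial A ⊗[A] V))
    (hRees : Rees = Submodule.span (Polynomial A)
      { w : LaurentPolynomial A ⊗[A] V |
        ∃ q : ℤ, ∃ v ∈ F q, w = LaurentPolynomial.T q ⊗ₜ[A] v }) :
    (∀ w ∈ Rees, αt w ∈
        Set.range (Polynomial.toLaurent : Polynomial A →+* LaurentPolynomial A)) ↔
      (∀ q : ℤ, q < -p → F q ≤ LinearMap.ker α) := by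
  have hsmul : ∀ (f : Polynomial A) (w : LaurentPolynomial A ⊗[A] V),
      f • w = (Polynomial.toLaurent f : LaurentPolynomial A) • w := by
    intro f w
    induction w using TensorProduct.induction_on with
    | zero => simp
    | tmul g v =>
      rw [TensorProduct.smul_tmul', TensorProduct.smul_tmul', Algebra.smul_def,
        algebraMap_eq_toLaurent, smul_eq_mul]
    | add a b ha hb => rw [smul_add, smul_add, ha, hb]
  have hgen : ∀ (q : ℤ) (v : V), αt (LaurentPolynomial.T q ⊗ₜ[A] v) =
      LaurentPolynomial.T (p + q) * LaurentPolynomial.C (α v) := by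
    intro q v
    rw [hαt, ← LaurentPolynomial.T_add]
    rfl
  subst hRees
  constructor
  · intro h q hq v hv
    obtain ⟨f, hf⟩ := h _ (Submodule.subset_span ⟨q, v, hv, rfl⟩)
    rw [hgen] at hf
    obtain ⟨k, hk⟩ := Int.eq_ofNat_of_zero_le (show 0 ≤ -(p + q) by omega)
    have hk0 : k ≠ 0 := by rintro rfl; simp at hk; omega
    have h2 : Polynomial.toLaurent (f * Polynomial.X ^ k) =
        Polynomial.toLaurent (Polynomial.C (α v)) := by
      rw [map_mul, hf, Polynomial.toLaurent_X_pow, Polynomial.toLaurent_C, ← hk,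
        mul_right_comm, ← LaurentPolynomial.T_add, add_neg_cancel, LaurentPolynomial.T_zero,
        one_mul]
    have h3 := congrArg (fun g => Polynomial.coeff g 0) (Polynomial.toLaurent_injective h2)
    simp [Polynomial.coeff_zero_eq_eval_zero, hk0] at h3
    exact h3.symm
  · intro h w hw
    induction hw using Submodule.span_induction with
    | mem w hw =>
      obtain ⟨q, v, hv, rfl⟩ := hw
      rw [hgen]
      by_cases hq : q < -p
      · have h0 : α v = 0 := h q hq hv
        exact ⟨0, by simp [h0]⟩
      · obtain ⟨k, hk⟩ := Int.eq_ofNat_of_zero_le (show 0 ≤ p + q by omega)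
        refine ⟨Polynomial.X ^ k * Polynomial.C (α v), ?_⟩
        rw [map_mul, Polynomial.toLaurent_X_pow, Polynomial.toLaurent_C, hk]
    | zero => exact ⟨0, by simp⟩
    | add a b _ _ ha hb =>
      obtain ⟨f, hf⟩ := ha
      obtain ⟨g, hg⟩ := hb
      exact ⟨f + g, by rw [map_add, map_add, hf, hg]⟩
    | smul f a _ ha =>
      obtain ⟨g, hg⟩ := ha
      exact ⟨f * g, by rw [hsmul, map_smul, map_mul, hg, smul_eq_mul]⟩
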